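/- Let A₁ be the first Weyl algebra over a field K of characteristic zero, with H = YX, and let σ be the automorphism of K[H] with σ(H) = H − 1. For every integer p ≥ 1 and all α, β ∈ K[H], the commutator satisfies [αX^p, βY^p] = (1 − σ^{−p})(α·σ^p(β)·(p,−p)), where (p,−p) = (H−p)(H−p+1)⋯(H−1). -/

import Mathlib

open Polynomial

noncomputable section

variable (K : Type) [Field K] [CharZero K]

/-- Defining relation of the first Weyl algebra: `Y*X = X*Y + 1`, i.e. `[Y,X] = 1`
(`true` encodes `X`, `false` encodes `Y`). -/
inductive WeylRel : FreeAlgebra K Bool → FreeAlgebra K Bool → Prop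
  | comm : WeylRel (FreeAlgebra.ι K false * FreeAlgebra.ι K true)
      (FreeAlgebra.ι K true * FreeAlgebra.ι K false + 1)

/-- The first Weyl algebra `A₁ = K⟨X,Y | YX - XY = 1⟩`. -/
abbrev Weyl : Type := RingQuot (WeylRel K)

/-- The generator `X` of the Weyl algebra. -/
def Wx : Weyl K := RingQuot.mkAlgHom K (WeylRel K) (FreeAlgebra.ι K true)

/-- The generator `Y` of the Weyl algebra. -/
def Wy : Weyl K := RingQuot.mkAlgHom K (WeylRel K) (FreeAlgebra.ι K false)

/-- The element `H = Y*X`. -/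
def WH : Weyl K := Wy K * Wx K

/-- `X^n` for `n ≥ 0` and `Y^{-n}` for `n < 0`. -/
def weight (n : ℤ) : Weyl K := if 0 ≤ n then Wx K ^ n.toNat else Wy K ^ (-n).toNat

/-- The `n`-th homogeneous component `A_{1,n}` of the `ℤ`-grading of the Weyl algebra:
`K[H]·Xⁿ` for `n ≥ 0` and `K[H]·Y^{-n}` for `n < 0`. -/
def component (n : ℤ) : Submodule K (Weyl K) :=
  LinearMap.range ((LinearMap.mulRight K (weight K n)).comp
    (Polynomial.aeval (WH K)).toLinearMap)

theorem Wyx : Wy K * Wx K = Wx K * Wy K + 1 := by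
  have h := RingQuot.mkAlgHom_rel K (WeylRel.comm (K := K))
  simpa [Wx, Wy] using h

theorem Wx_comm (σ : Polynomial K ≃ₐ[K] Polynomial K)
    (hσ : σ Polynomial.X = Polynomial.X - Polynomial.C 1) (f : Polynomial K) :
    Wx K * aeval (WH K) f = aeval (WH K) (σ f) * Wx K := by
  have hX : Wx K * WH K = (WH K - 1) * Wx K := by
    have : WH K - 1 = Wx K * Wy K := by rw [WH, Wyx]; abel
    rw [this, WH, mul_assoc]
  induction f using Polynomial.induction_on' with
  | add f g hf hg => simp only [map_add, mul_add, add_mul, hf, hg]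
  | monomial n a =>
    rw [← Polynomial.C_mul_X_pow_eq_monomial]
    have hC : σ (C a) = C a := σ.commutes a
    simp only [map_mul, map_pow, hσ, hC, map_sub, aeval_X, aeval_C, map_one]
    rw [← mul_assoc, ← Algebra.commutes a (Wx K), mul_assoc, mul_assoc]
    congr 1
    exact (SemiconjBy.pow_right (show SemiconjBy (Wx K) (WH K) (WH K - 1) from hX) n)

theorem Wy_comm (σ : Polynomial K ≃ₐ[K] Polynomial K)
    (hσ : σ Polynomial.X = Polynomial.X + Polynomial.C 1) (f : Polynomial K) :
    Wy K * aeval (WH K) f = aeval (WH K) (σ f) * Wy K := by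
  have hX : Wy K * WH K = (WH K + 1) * Wy K := by
    rw [WH, add_mul, mul_assoc (Wy K) (Wx K)]
    conv_lhs => rw [Wyx]
    rw [mul_add, mul_one, one_mul]
  induction f using Polynomial.induction_on' with
  | add f g hf hg => simp only [map_add, mul_add, add_mul, hf, hg]
  | monomial n a =>
    rw [← Polynomial.C_mul_X_pow_eq_monomial]
    have hC : σ (C a) = C a := σ.commutes a
    simp only [map_mul, map_pow, hσ, hC, map_add, aeval_X, aeval_C, map_one]
    rw [← mul_assoc, ← Algebra.commutes a (Wy K), mul_assoc, mul_assoc]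
    congr 1
    exact (SemiconjBy.pow_right (show SemiconjBy (Wy K) (WH K) (WH K + 1) from hX) n)

theorem pow_comm_aux (w : Weyl K) (σ : Polynomial K ≃ₐ[K] Polynomial K)
    (h : ∀ f : Polynomial K, w * aeval (WH K) f = aeval (WH K) (σ f) * w) (p : ℕ) :
    ∀ f : Polynomial K, w ^ p * aeval (WH K) f = aeval (WH K) ((σ ^ p) f) * w ^ p := by
  induction p with
  | zero => intro f; simp
  | succ p ih =>
    intro f
    rw [pow_succ, mul_assoc, h, ← mul_assoc, ih, mul_assoc, pow_succ σ, AlgEquiv.mul_apply]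

theorem pow_shift_aux (σ : Polynomial K ≃ₐ[K] Polynomial K) (c : K)
    (h : σ Polynomial.X = Polynomial.X + Polynomial.C c) (p : ℕ) :
    (σ ^ p) Polynomial.X = Polynomial.X + Polynomial.C (p * c) := by
  induction p with
  | zero => simp
  | succ p ih =>
    have hC : σ (C (p * c)) = C (p * c) := σ.commutes _
    rw [pow_succ', AlgEquiv.mul_apply, ih, map_add, h, hC, add_assoc, ← C_add]
    congr 2
    push_cast
    ring

/-- **Commutator formula.** For `σ(H) = H − 1`, `p ≥ 1` and `α, β ∈ K[H]`:
`[αX^p, βY^p] = (1 − σ^{−p})(α·σ^p(β)·(p,−p))`, where `(p,−p) = (H−p)(H−p+1)⋯(H−1)`. -/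
theorem commutator_formula (σ : Polynomial K ≃ₐ[K] Polynomial K)
    (hσ : σ Polynomial.X = Polynomial.X - Polynomial.C 1)
    (p : ℕ) (hp : 1 ≤ p) (α β : Polynomial K) :
    (Polynomial.aeval (WH K) α * Wx K ^ p) * (Polynomial.aeval (WH K) β * Wy K ^ p) -
      (Polynomial.aeval (WH K) β * Wy K ^ p) * (Polynomial.aeval (WH K) α * Wx K ^ p) =
    Polynomial.aeval (WH K)
      (α * (σ ^ p) β * ∏ k ∈ Finset.range p, (Polynomial.X - Polynomial.C ((k : K) + 1)) -
        (σ ^ (-(p : ℤ)))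
          (α * (σ ^ p) β * ∏ k ∈ Finset.range p, (Polynomial.X - Polynomial.C ((k : K) + 1)))) := by
  have hσ' : σ X = X + C (-1) := by rw [hσ, C_neg, sub_eq_add_neg]
  have hτ : σ⁻¹ X = X + C 1 := by
    have h1 : σ (X + C 1) = X := by
      have hC : σ (C 1) = C 1 := σ.commutes 1
      rw [map_add, hσ, hC]; ring
    conv_lhs => rw [← h1]
    exact σ.symm_apply_apply _
  have hx := Wx_comm K σ hσ
  have hy := Wy_comm K σ⁻¹ hτ
  have hxp := pow_comm_aux K (Wx K) σ hx
  have hyp := pow_comm_aux K (Wy K) σ⁻¹ hy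
  have hXY : ∀ p : ℕ, Wx K ^ p * Wy K ^ p =
      aeval (WH K) (∏ k ∈ Finset.range p, (X - C ((k : K) + 1))) := by
    intro p
    induction p with
    | zero => simp
    | succ p ih =>
      have e : Wx K * Wy K = aeval (WH K) (X - C 1 : K[X]) := by
        rw [map_sub, aeval_X, aeval_C, map_one, WH, Wyx]; abel
      have e2 : (σ ^ p) (X - C 1) = X - C ((p : K) + 1) := by
        have hC : (σ ^ p) (C 1) = C 1 := (σ ^ p).commutes 1
        rw [map_sub, hC, pow_shift_aux K σ _ hσ' p]
        simp only [mul_neg, mul_one, C_neg, C_add]; ring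
      rw [pow_succ, pow_succ', mul_assoc, ← mul_assoc (Wx K) (Wy K), e, ← mul_assoc, hxp, e2,
        mul_assoc, ih, ← map_mul, Finset.prod_range_succ, mul_comm]
  have hYX : ∀ p : ℕ, Wy K ^ p * Wx K ^ p =
      aeval (WH K) ((σ⁻¹ ^ p) (∏ k ∈ Finset.range p, (X - C ((k : K) + 1)))) := by
    intro p
    induction p with
    | zero => simp
    | succ p ih =>
      have e2 : (σ⁻¹ ^ (p + 1)) (X - C ((p : K) + 1)) = X := by
        have hC : (σ⁻¹ ^ (p + 1)) (C ((p : K) + 1)) = C ((p : K) + 1) :=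
          (σ⁻¹ ^ (p + 1)).commutes _
        rw [map_sub, hC, pow_shift_aux K σ⁻¹ _ hτ (p + 1)]
        push_cast
        simp
      have e3 : Wy K * Wx K = aeval (WH K) (X : K[X]) := by rw [aeval_X, WH]
      rw [pow_succ', pow_succ (Wx K), mul_assoc, ← mul_assoc (Wy K ^ p), ih, ← mul_assoc, hy,
        mul_assoc, e3, ← map_mul, Finset.prod_range_succ, map_mul (σ⁻¹ ^ (p + 1)), e2, pow_succ' σ⁻¹,
        AlgEquiv.mul_apply]
  have hz : σ ^ (-(p : ℤ)) = σ⁻¹ ^ p := by rw [zpow_neg, zpow_natCast, inv_pow]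
  have hc : (σ⁻¹ ^ p) ((σ ^ p) β) = β := by
    rw [← AlgEquiv.mul_apply, inv_pow, inv_mul_cancel, AlgEquiv.one_apply]
  rw [hz, map_sub, map_mul (σ⁻¹ ^ p), map_mul (σ⁻¹ ^ p), hc]
  congr 1
  · rw [mul_assoc, ← mul_assoc (Wx K ^ p), hxp, mul_assoc, hXY, map_mul, map_mul, mul_assoc]
  · rw [mul_assoc, ← mul_assoc (Wy K ^ p), hyp, mul_assoc, hYX, mul_comm ((σ⁻¹ ^ p) α) β,
      map_mul, map_mul, mul_assoc]
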